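/- Let A = (A_1,…,A_g) and B = (B_1,…,B_g) be g-tuples of real symmetric matrices (of sizes d_A×d_A and d_B×d_B, respectively). Then for every integer n ≥ 1: (i) D_A^ℝ(2n) ⊆ D_B^ℝ(2n) implies D_A^ℂ(n) ⊆ D_B^ℂ(n); (ii) D_A^ℂ(n) ⊆ D_B^ℂ(n) implies D_A^ℝ(n) ⊆ D_B^ℝ(n). In particular, D_A^ℂ(n) ⊆ D_B^ℂ(n) holds for all n ≥ 1 if and only if D_A^ℝ(n) ⊆ D_B^ℝ(n) holds for all n ≥ 1. -/

import Mathlib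

open Matrix
open scoped Kronecker ComplexOrder

/-- The `n`-th level of the complex free spectrahedron determined by a real tuple `A`. -/
def DC {g d : ℕ} (A : Fin g → Matrix (Fin d) (Fin d) ℝ) (n : ℕ) :
    Set (Fin g → Matrix (Fin n) (Fin n) ℂ) :=
  {X | (∀ i, (X i).IsHermitian) ∧
    ((1 : Matrix (Fin d × Fin n) (Fin d × Fin n) ℂ)
      - ∑ i, (A i).map (Complex.ofReal) ⊗ₖ X i).PosSemidef}

/-- The `n`-th level of the real free spectrahedron determined by a real tuple `A`. -/
def DR {g d : ℕ} (A : Fin g → Matrix (Fin d) (Fin d) ℝ) (n : ℕ) :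
    Set (Fin g → Matrix (Fin n) (Fin n) ℝ) :=
  {X | (∀ i, (X i).IsSymm) ∧
    ((1 : Matrix (Fin d × Fin n) (Fin d × Fin n) ℝ) - ∑ i, A i ⊗ₖ X i).PosSemidef}

/-!
Writing a complex matrix as `R + iJ`, the real matrix with blocks `R, -J, J, R` acts on the real
and imaginary parts of vectors, so it is symmetric, respectively positive semidefinite, exactly when
`R + iJ` is Hermitian, respectively positive semidefinite. Because the coefficients `A i` are real,
this realification carries `1 - ∑ A i ⊗ X i` to the same expression in the realifications of the
`X i`, up to a permutation of the basis: a complex tuple of size `n` is a special real tuple of size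
`2n`. Conversely, a real tuple of size `n` is a special complex tuple of size `n`. Both embeddings
preserve and reflect membership, and inclusions of the spectrahedra are pulled back along them.
-/

section Realification

variable {l m n p : Type*}

/-- The realification of a complex matrix: the matrix of the underlying real linear map in the
coordinates `(re z, im z)`. -/
def realify : Matrix m n ℂ →ₗ[ℝ] Matrix (m ⊕ m) (n ⊕ n) ℝ where
  toFun M := fromBlocks (M.map Complex.re) (-M.map Complex.im) (M.map Complex.im)
    (M.map Complex.re)
  map_add' M N := by
    ext (i | i) (j | j) <;> simp [add_comm]
  map_smul' c M := by
    ext (i | i) (j | j) <;> simp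

theorem realify_apply (M : Matrix m n ℂ) :
    realify M = fromBlocks (M.map Complex.re) (-M.map Complex.im) (M.map Complex.im)
      (M.map Complex.re) :=
  rfl

theorem realify_one [DecidableEq n] : realify (1 : Matrix n n ℂ) = 1 := by
  ext (i | i) (j | j) <;> simp [realify_apply, one_apply, apply_ite]

theorem realify_conjTranspose (M : Matrix m n ℂ) : realify Mᴴ = (realify M)ᴴ := by
  ext (i | i) (j | j) <;> simp [realify_apply]

theorem realify_injective :
    Function.Injective (realify : Matrix m n ℂ → Matrix (m ⊕ m) (n ⊕ n) ℝ) := by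
  intro M N h
  obtain ⟨hre, -, him, -⟩ := fromBlocks_inj.mp h
  ext i j
  exact Complex.ext (congr_fun₂ hre i j) (congr_fun₂ him i j)

theorem realify_map_ofReal_kronecker (A : Matrix l m ℝ) (X : Matrix n p ℂ) :
    realify (A.map Complex.ofReal ⊗ₖ X) =
      (A ⊗ₖ realify X).submatrix (Equiv.prodSumDistrib l n n).symm
        (Equiv.prodSumDistrib m p p).symm := by
  ext (⟨a, i⟩ | ⟨a, i⟩) (⟨b, j⟩ | ⟨b, j⟩) <;> simp [realify_apply]

theorem isHermitian_realify_iff {M : Matrix n n ℂ} :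
    (realify M).IsHermitian ↔ M.IsHermitian := by
  rw [IsHermitian, ← realify_conjTranspose, realify_injective.eq_iff, IsHermitian]

/-- The coordinates `(re z, im z)` of a complex vector, in which `realify` expresses matrices. -/
def realifyVec (z : n → ℂ) : n ⊕ n → ℝ :=
  Sum.elim (Complex.re ∘ z) (Complex.im ∘ z)

theorem realifyVec_surjective : Function.Surjective (realifyVec : (n → ℂ) → n ⊕ n → ℝ) :=
  fun x => ⟨fun i => ⟨x (.inl i), x (.inr i)⟩, Sum.elim_comp_inl_inr x⟩

theorem realify_mulVec_realifyVec [Fintype n] (M : Matrix m n ℂ) (z : n → ℂ) :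
    realify M *ᵥ realifyVec z = realifyVec (M *ᵥ z) := by
  ext (i | i) <;>
    simp [realify_apply, realifyVec, mulVec, dotProduct, sub_eq_add_neg, Finset.sum_add_distrib,
      add_comm]

theorem star_realifyVec_dotProduct_realifyVec [Fintype n] (z w : n → ℂ) :
    star (realifyVec z) ⬝ᵥ realifyVec w = (star z ⬝ᵥ w).re := by
  simp [realifyVec, dotProduct, Finset.sum_add_distrib]

theorem posSemidef_realify_iff [Finite n] {M : Matrix n n ℂ} :
    (realify M).PosSemidef ↔ M.PosSemidef := by
  have := Fintype.ofFinite n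
  rw [posSemidef_iff_dotProduct_mulVec, posSemidef_iff_dotProduct_mulVec, isHermitian_realify_iff,
    realifyVec_surjective.forall]
  refine and_congr_right fun hM => forall_congr' fun z => ?_
  have him : (star z ⬝ᵥ (M *ᵥ z)).im = 0 := hM.im_star_dotProduct_mulVec_self z
  rw [realify_mulVec_realifyVec, star_realifyVec_dotProduct_realifyVec, Complex.nonneg_iff, him]
  exact (and_iff_left rfl).symm

end Realification

section RealMatrices

variable {𝕜 n : Type*} [RCLike 𝕜]

theorem isHermitian_map_ofReal_iff {M : Matrix n n ℝ} :
    (M.map (RCLike.ofReal : ℝ → 𝕜)).IsHermitian ↔ M.IsHermitian :=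
  isHermitian_map_iff (fun x => by simp) RCLike.ofReal_injective

theorem star_dotProduct_map_ofReal_mulVec [Fintype n] (M : Matrix n n ℝ) (x : n → ℝ) :
    star (RCLike.ofReal ∘ x : n → 𝕜) ⬝ᵥ (M.map RCLike.ofReal *ᵥ (RCLike.ofReal ∘ x)) =
      ((star x ⬝ᵥ (M *ᵥ x) : ℝ) : 𝕜) := by
  simp [dotProduct, mulVec]

open scoped MatrixOrder in
theorem posSemidef_map_ofReal_iff [Finite n] {M : Matrix n n ℝ} :
    (M.map (RCLike.ofReal : ℝ → 𝕜)).PosSemidef ↔ M.PosSemidef := by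
  classical
  have := Fintype.ofFinite n
  refine ⟨fun h => ?_, fun h => ?_⟩
  · refine .of_dotProduct_mulVec_nonneg (isHermitian_map_ofReal_iff.mp h.isHermitian) fun x => ?_
    have hx := h.dotProduct_mulVec_nonneg (RCLike.ofReal ∘ x)
    rwa [star_dotProduct_map_ofReal_mulVec, RCLike.ofReal_nonneg] at hx
  · obtain ⟨N, rfl⟩ := CStarAlgebra.nonneg_iff_eq_star_mul_self.mp h.nonneg
    have hN : (star N * N).map (RCLike.ofReal : ℝ → 𝕜) =
        (N.map RCLike.ofReal)ᴴ * N.map RCLike.ofReal := by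
      ext i j
      simp [mul_apply]
    exact hN ▸ posSemidef_conjTranspose_mul_self _

end RealMatrices

section MonicPencil

variable {ι α m n R S : Type*} [Fintype ι] [DecidableEq α] [DecidableEq m] [DecidableEq n]

/-- The monic linear pencil `1 - ∑ i, A i ⊗ X i` whose positive semidefiniteness defines the free
spectrahedron of the coefficient tuple `A`. -/
def monicPencil [Ring R] (A : ι → Matrix α α R) (X : ι → Matrix n n R) :
    Matrix (α × n) (α × n) R :=
  1 - ∑ i, A i ⊗ₖ X i

theorem map_monicPencil [Ring R] [Ring S] (f : R →+* S) (A : ι → Matrix α α R)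
    (X : ι → Matrix n n R) :
    (monicPencil A X).map f = monicPencil (fun i => (A i).map f) fun i => (X i).map f := by
  ext a b
  simp [monicPencil, Matrix.sum_apply, one_apply, apply_ite]

theorem monicPencil_submatrix [Ring R] (e : m ≃ n) (A : ι → Matrix α α R)
    (X : ι → Matrix n n R) :
    monicPencil A (fun i => (X i).submatrix e e) =
      (monicPencil A X).submatrix ((Equiv.refl α).prodCongr e) ((Equiv.refl α).prodCongr e) := by
  ext a b
  simp [monicPencil, Matrix.sum_apply, one_apply, Prod.ext_iff]

theorem realify_monicPencil (A : ι → Matrix α α ℝ) (X : ι → Matrix n n ℂ) :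
    realify (monicPencil (fun i => (A i).map Complex.ofReal) X) =
      (monicPencil A fun i => realify (X i)).submatrix (Equiv.prodSumDistrib α n n).symm
        (Equiv.prodSumDistrib α n n).symm := by
  simp only [monicPencil, map_sub, map_sum, realify_one, realify_map_ofReal_kronecker]
  ext a b
  simp [Matrix.sum_apply, one_apply]

theorem posSemidef_monicPencil_submatrix_iff [Ring R] [PartialOrder R] [StarRing R] (e : m ≃ n)
    {A : ι → Matrix α α R} {X : ι → Matrix n n R} :
    (monicPencil A fun i => (X i).submatrix e e).PosSemidef ↔ (monicPencil A X).PosSemidef := by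
  rw [monicPencil_submatrix, posSemidef_submatrix_equiv]

theorem posSemidef_monicPencil_realify_iff [Finite α] [Finite n] {A : ι → Matrix α α ℝ}
    {X : ι → Matrix n n ℂ} :
    (monicPencil A fun i => realify (X i)).PosSemidef ↔
      (monicPencil (fun i => (A i).map Complex.ofReal) X).PosSemidef := by
  rw [← posSemidef_realify_iff, realify_monicPencil, posSemidef_submatrix_equiv]

theorem posSemidef_monicPencil_map_ofReal_iff {𝕜 : Type*} [RCLike 𝕜] [Finite α] [Finite n]
    {A : ι → Matrix α α ℝ} {X : ι → Matrix n n ℝ} :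
    (monicPencil (fun i => (A i).map (RCLike.ofReal : ℝ → 𝕜))
        fun i => (X i).map RCLike.ofReal).PosSemidef ↔
      (monicPencil A X).PosSemidef := by
  rw [← posSemidef_map_ofReal_iff (𝕜 := 𝕜)]
  exact iff_of_eq (congr_arg _ (map_monicPencil (algebraMap ℝ 𝕜) A X).symm)

end MonicPencil

section FreeSpectrahedra

variable {g d dA dB m n : ℕ}

theorem submatrix_realify_mem_DR_iff (e : Fin m ≃ Fin n ⊕ Fin n)
    {A : Fin g → Matrix (Fin d) (Fin d) ℝ} {X : Fin g → Matrix (Fin n) (Fin n) ℂ} :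
    (fun i => (realify (X i)).submatrix e e) ∈ DR A m ↔ X ∈ DC A n := by
  refine and_congr (forall_congr' fun i => ?_) ?_
  · rw [← isHermitian_iff_isSymm, isHermitian_submatrix_equiv, isHermitian_realify_iff]
  · exact (posSemidef_monicPencil_submatrix_iff e).trans posSemidef_monicPencil_realify_iff

theorem map_ofReal_mem_DC_iff {A : Fin g → Matrix (Fin d) (Fin d) ℝ}
    {X : Fin g → Matrix (Fin n) (Fin n) ℝ} :
    (fun i => (X i).map Complex.ofReal) ∈ DC A n ↔ X ∈ DR A n :=
  and_congr (forall_congr' fun _ => isHermitian_map_ofReal_iff.trans isHermitian_iff_isSymm)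
    posSemidef_monicPencil_map_ofReal_iff

theorem DC_subset_DC_of_DR_two_mul_subset {A : Fin g → Matrix (Fin dA) (Fin dA) ℝ}
    {B : Fin g → Matrix (Fin dB) (Fin dB) ℝ} (h : DR A (2 * n) ⊆ DR B (2 * n)) :
    DC A n ⊆ DC B n := by
  let e : Fin (2 * n) ≃ Fin n ⊕ Fin n := (finCongr (two_mul n)).trans finSumFinEquiv.symm
  exact fun X hX =>
    (submatrix_realify_mem_DR_iff e).mp (h ((submatrix_realify_mem_DR_iff e).mpr hX))

theorem DR_subset_DR_of_DC_subset_DC {A : Fin g → Matrix (Fin dA) (Fin dA) ℝ}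
    {B : Fin g → Matrix (Fin dB) (Fin dB) ℝ} (h : DC A n ⊆ DC B n) : DR A n ⊆ DR B n :=
  fun _ hX => map_ofReal_mem_DC_iff.mp (h (map_ofReal_mem_DC_iff.mpr hX))

end FreeSpectrahedra

theorem stmt_8_general {g dA dB : ℕ}
    (A : Fin g → Matrix (Fin dA) (Fin dA) ℝ) (B : Fin g → Matrix (Fin dB) (Fin dB) ℝ) :
    (∀ n : ℕ,
      ((DR A (2 * n) ⊆ DR B (2 * n) → DC A n ⊆ DC B n) ∧
       (DC A n ⊆ DC B n → DR A n ⊆ DR B n))) ∧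
    ((∀ n : ℕ, 1 ≤ n → DC A n ⊆ DC B n) ↔ (∀ n : ℕ, 1 ≤ n → DR A n ⊆ DR B n)) := by
  refine ⟨fun n => ⟨DC_subset_DC_of_DR_two_mul_subset, DR_subset_DR_of_DC_subset_DC⟩, ?_, ?_⟩
  · exact fun h n hn => DR_subset_DR_of_DC_subset_DC (h n hn)
  · exact fun h n hn => DC_subset_DC_of_DR_two_mul_subset (h (2 * n) (by lia))

/-- For `g`-tuples `A`, `B` of real symmetric matrices and every `n ≥ 1`:
`D_A^ℝ(2n) ⊆ D_B^ℝ(2n)` implies `D_A^ℂ(n) ⊆ D_B^ℂ(n)`, which implies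
`D_A^ℝ(n) ⊆ D_B^ℝ(n)`.  In particular the complex inclusions hold at all levels iff the
real inclusions hold at all levels. -/
theorem stmt_8 {g dA dB : ℕ}
    (A : Fin g → Matrix (Fin dA) (Fin dA) ℝ) (B : Fin g → Matrix (Fin dB) (Fin dB) ℝ)
    (hA : ∀ i, (A i).IsSymm) (hB : ∀ i, (B i).IsSymm) :
    (∀ n : ℕ, 1 ≤ n →
      ((DR A (2 * n) ⊆ DR B (2 * n) → DC A n ⊆ DC B n) ∧
       (DC A n ⊆ DC B n → DR A n ⊆ DR B n))) ∧
    ((∀ n : ℕ, 1 ≤ n → DC A n ⊆ DC B n) ↔ (∀ n : ℕ, 1 ≤ n → DR A n ⊆ DR B n)) :=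
  ⟨fun n _ => (stmt_8_general A B).1 n, (stmt_8_general A B).2⟩
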